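/- If X is a random variable with the Poisson distribution of mean 1, then for every natural number n the expectation of X^n equals the n-th Bell number; that is, e^{-1} ∑_{k=0}^∞ k^n / k! = B_n. -/

import Mathlib

/-- The Bell numbers: `bell 0 = 1` and `bell (n+1) = ∑_{k=0}^{n} (n choose k) * bell k`. -/
def bell : ℕ → ℕ
  | 0 => 1
  | n + 1 => ∑ k ∈ (Finset.range (n + 1)).attach, Nat.choose n k.1 * bell k.1
decreasing_by exact Finset.mem_range.mp k.2

/-!
Since `k / k! = 1 / (k - 1)!`, the Poisson law of mean `r` satisfies `E[X f(X)] = r E[f(X + 1)]`.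
For `f(x) = xⁿ` the binomial theorem expands the right-hand side as `r ∑ⱼ (n choose j) E[Xʲ]`,
so at `r = 1` the moments obey the recurrence that defines the Bell numbers.
-/

theorem bell_zero : bell 0 = 1 := by
  rw [bell]

theorem bell_succ (n : ℕ) :
    bell (n + 1) = ∑ j ∈ Finset.range (n + 1), n.choose j * bell j := by
  rw [bell, Finset.sum_attach (Finset.range (n + 1)) fun j => n.choose j * bell j]

section PoissonWeights

variable {𝕜 : Type*} [Semifield 𝕜] [CharZero 𝕜] [TopologicalSpace 𝕜] [IsTopologicalSemiring 𝕜]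

theorem hasSum_natCast_mul_mul_pow_div_factorial {f : ℕ → 𝕜} {r s : 𝕜}
    (hf : HasSum (fun k : ℕ => f (k + 1) * (r ^ k / k.factorial)) s) :
    HasSum (fun k : ℕ => k * f k * (r ^ k / k.factorial)) (r * s) := by
  have zero_off_range : ∀ k ∉ Set.range Nat.succ, (k : 𝕜) * f k * (r ^ k / k.factorial) = 0 := by
    simp
  have shift (k : ℕ) : ((k + 1 : ℕ) : 𝕜) * f (k + 1) * (r ^ (k + 1) / (k + 1).factorial) =
      r * (f (k + 1) * (r ^ k / k.factorial)) := by
    have succ_ne_zero : ((k + 1 : ℕ) : 𝕜) ≠ 0 := Nat.cast_ne_zero.mpr k.succ_ne_zero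
    rw [Nat.factorial_succ, Nat.cast_mul]
    field
  rw [← Nat.succ_injective.hasSum_iff zero_off_range]
  simpa only [Function.comp_def, Nat.succ_eq_add_one, shift] using hf.mul_left r

theorem hasSum_pow_succ_mul_pow_div_factorial {r : 𝕜} {m : ℕ → 𝕜} {n : ℕ}
    (hm : ∀ j ≤ n, HasSum (fun k : ℕ => (k : 𝕜) ^ j * (r ^ k / k.factorial)) (m j)) :
    HasSum (fun k : ℕ => (k : 𝕜) ^ (n + 1) * (r ^ k / k.factorial))
      (r * ∑ j ∈ Finset.range (n + 1), n.choose j * m j) := by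
  have binomial (k : ℕ) : ((k + 1 : ℕ) : 𝕜) ^ n * (r ^ k / k.factorial) =
      ∑ j ∈ Finset.range (n + 1), n.choose j * ((k : 𝕜) ^ j * (r ^ k / k.factorial)) := by
    rw [Nat.cast_add_one, add_pow, Finset.sum_mul]
    exact Finset.sum_congr rfl fun j _ => by ring
  have shifted : HasSum (fun k : ℕ => ((k + 1 : ℕ) : 𝕜) ^ n * (r ^ k / k.factorial))
      (∑ j ∈ Finset.range (n + 1), n.choose j * m j) := by
    simp only [binomial]
    exact hasSum_sum fun j hj => (hm j (Finset.mem_range_succ_iff.mp hj)).mul_left _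
  simpa only [pow_succ'] using
    hasSum_natCast_mul_mul_pow_div_factorial (f := fun k => (k : 𝕜) ^ n) shifted

end PoissonWeights

theorem hasSum_pow_div_factorial_exp_one_mul_bell (n : ℕ) :
    HasSum (fun k : ℕ => (k : ℝ) ^ n / k.factorial) (Real.exp 1 * bell n) := by
  induction n using Nat.strong_induction_on with
  | _ n ih =>
    cases n with
    | zero =>
      simpa [bell_zero, Real.exp_eq_exp_ℝ] using NormedSpace.expSeries_div_hasSum_exp (1 : ℝ)
    | succ n =>
      have lower_moments (j : ℕ) (hj : j ≤ n) :
          HasSum (fun k : ℕ => (k : ℝ) ^ j * (1 ^ k / k.factorial)) (Real.exp 1 * bell j) := by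
        simpa only [one_pow, mul_one_div] using ih j (Nat.lt_succ_of_le hj)
      have bell_recurrence : Real.exp 1 * (bell (n + 1) : ℝ) =
          1 * ∑ j ∈ Finset.range (n + 1), n.choose j * (Real.exp 1 * bell j) := by
        simp only [bell_succ, Nat.cast_sum, Nat.cast_mul, Finset.mul_sum, one_mul, mul_left_comm]
      simpa only [bell_recurrence, one_pow, mul_one_div] using
        hasSum_pow_succ_mul_pow_div_factorial lower_moments

/-- For a random variable `X` with Poisson distribution of mean 1 (i.e. `P(X = k) = e⁻¹ / k!`),
the expectation of `Xⁿ` is the `n`-th Bell number: `e⁻¹ ∑ₖ kⁿ / k! = Bₙ`. -/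
theorem poisson_moment_eq_bell (n : ℕ) :
    Summable (fun k : ℕ => (k : ℝ) ^ n / (Nat.factorial k)) ∧
      Real.exp (-1) * ∑' k : ℕ, (k : ℝ) ^ n / (Nat.factorial k) = (bell n : ℝ) := by
  have moment := hasSum_pow_div_factorial_exp_one_mul_bell n
  refine ⟨moment.summable, ?_⟩
  rw [moment.tsum_eq, Real.exp_neg, inv_mul_cancel_left₀ (Real.exp_ne_zero 1)]
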